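/- Every symmetric measure is pseudo symmetric. For every pseudo symmetric measure ξ, the matrix C_{ξ11} is positive definite (hence invertible) and the information matrix satisfies C_{ξ00} − C_{ξ01}C_{ξ11}⁻¹C_{ξ10} = q*_ξ · B_t/(t−1), where q*_ξ = c_{ξ00} − c_{ξ01}²/c_{ξ11}. -/

import Mathlib

open Matrix

namespace TwoDim

/-- The set of plots of an `a × b` block. -/
abbrev Plot (a b : ℕ) := Fin a × Fin b

/-- A block array: an assignment of one of `t` treatments to each plot. -/
abbrev BlockArray (a b t : ℕ) := Plot a b → Fin t

/-- The all-ones matrix. -/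
def Jmat (n : Type*) : Matrix n n ℝ := Matrix.of fun _ _ => 1

/-- `B_m = I - J/m`. -/
noncomputable def Bmat (n : Type*) [Fintype n] [DecidableEq n] : Matrix n n ℝ :=
  1 - ((Fintype.card n : ℝ))⁻¹ • Jmat n

variable {a b t : ℕ}

/-- The treatment incidence matrix `T_s`. -/
def Tmat (s : BlockArray a b t) : Matrix (Plot a b) (Fin t) ℝ :=
  Matrix.of fun q k => if s q = k then 1 else 0

/-- Two plots are neighbors if they agree in one coordinate and differ by 1 in the other. -/
def Neighbor (q r : Plot a b) : Prop :=
  (q.1 = r.1 ∧ (q.2.val + 1 = r.2.val ∨ r.2.val + 1 = q.2.val)) ∨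
  (q.2 = r.2 ∧ (q.1.val + 1 = r.1.val ∨ r.1.val + 1 = q.1.val))

instance (q r : Plot a b) : Decidable (Neighbor q r) := by
  unfold Neighbor; infer_instance

/-- The adjacency matrix of the neighbor relation. -/
def Mmat (a b : ℕ) : Matrix (Plot a b) (Plot a b) ℝ :=
  Matrix.of fun q r => if Neighbor q r then 1 else 0

/-- `F_s = M T_s`. -/
def Fmat (s : BlockArray a b t) : Matrix (Plot a b) (Fin t) ℝ :=
  Mmat a b * Tmat s

/-- `B̃ = Σ⁻¹ − Σ⁻¹ J Σ⁻¹ / (1'Σ⁻¹1)`. -/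
noncomputable def Btilde (Sig : Matrix (Plot a b) (Plot a b) ℝ) :
    Matrix (Plot a b) (Plot a b) ℝ :=
  Sig⁻¹ - (∑ i, ∑ j, Sig⁻¹ i j)⁻¹ • (Sig⁻¹ * Jmat (Plot a b) * Sig⁻¹)

/-- `C_{s00} = T_s' W T_s` (with `W` playing the role of `B̃`). -/
def Cs00 (W : Matrix (Plot a b) (Plot a b) ℝ) (s : BlockArray a b t) :
    Matrix (Fin t) (Fin t) ℝ := (Tmat s)ᵀ * W * Tmat s

/-- `C_{s01} = T_s' W F_s`. -/
def Cs01 (W : Matrix (Plot a b) (Plot a b) ℝ) (s : BlockArray a b t) :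
    Matrix (Fin t) (Fin t) ℝ := (Tmat s)ᵀ * W * Fmat s

/-- `C_{s11} = F_s' W F_s`. -/
def Cs11 (W : Matrix (Plot a b) (Plot a b) ℝ) (s : BlockArray a b t) :
    Matrix (Fin t) (Fin t) ℝ := (Fmat s)ᵀ * W * Fmat s

/-- `c_{s00} = tr(B_t C_{s00})`. -/
noncomputable def cs00 (W : Matrix (Plot a b) (Plot a b) ℝ) (s : BlockArray a b t) : ℝ :=
  Matrix.trace (Bmat (Fin t) * Cs00 W s)

noncomputable def cs01 (W : Matrix (Plot a b) (Plot a b) ℝ) (s : BlockArray a b t) : ℝ :=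
  Matrix.trace (Bmat (Fin t) * Cs01 W s)

noncomputable def cs11 (W : Matrix (Plot a b) (Plot a b) ℝ) (s : BlockArray a b t) : ℝ :=
  Matrix.trace (Bmat (Fin t) * Cs11 W s)

/-- The quadratic `q_s(x) = c_{s00} + 2 c_{s01} x + c_{s11} x²`. -/
noncomputable def qpoly (W : Matrix (Plot a b) (Plot a b) ℝ) (s : BlockArray a b t) (x : ℝ) : ℝ :=
  cs00 W s + 2 * cs01 W s * x + cs11 W s * x ^ 2

/-- A measure on the set of block arrays: nonnegative weights summing to one. -/
def IsMeasure (ξ : BlockArray a b t → ℝ) : Prop :=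
  (∀ s, 0 ≤ ξ s) ∧ ∑ s, ξ s = 1

noncomputable def Cm00 (W : Matrix (Plot a b) (Plot a b) ℝ) (ξ : BlockArray a b t → ℝ) :
    Matrix (Fin t) (Fin t) ℝ := ∑ s, ξ s • Cs00 W s

noncomputable def Cm01 (W : Matrix (Plot a b) (Plot a b) ℝ) (ξ : BlockArray a b t → ℝ) :
    Matrix (Fin t) (Fin t) ℝ := ∑ s, ξ s • Cs01 W s

noncomputable def Cm11 (W : Matrix (Plot a b) (Plot a b) ℝ) (ξ : BlockArray a b t → ℝ) :
    Matrix (Fin t) (Fin t) ℝ := ∑ s, ξ s • Cs11 W s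

noncomputable def cm00 (W : Matrix (Plot a b) (Plot a b) ℝ) (ξ : BlockArray a b t → ℝ) : ℝ :=
  ∑ s, ξ s * cs00 W s

noncomputable def cm01 (W : Matrix (Plot a b) (Plot a b) ℝ) (ξ : BlockArray a b t → ℝ) : ℝ :=
  ∑ s, ξ s * cs01 W s

noncomputable def cm11 (W : Matrix (Plot a b) (Plot a b) ℝ) (ξ : BlockArray a b t → ℝ) : ℝ :=
  ∑ s, ξ s * cs11 W s

/-- `q*_ξ = c_{ξ00} − c_{ξ01}²/c_{ξ11}`. -/
noncomputable def qstar (W : Matrix (Plot a b) (Plot a b) ℝ) (ξ : BlockArray a b t → ℝ) : ℝ :=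
  cm00 W ξ - (cm01 W ξ) ^ 2 / cm11 W ξ

/-- `G` is a generalized inverse of `A`. -/
def IsGenInv (A G : Matrix (Fin t) (Fin t) ℝ) : Prop := A * G * A = A

/-- Information matrix `C_{ξ00} − C_{ξ01} G C_{ξ10}` computed with a generalized inverse `G`. -/
noncomputable def InfoMat (W : Matrix (Plot a b) (Plot a b) ℝ) (ξ : BlockArray a b t → ℝ)
    (G : Matrix (Fin t) (Fin t) ℝ) : Matrix (Fin t) (Fin t) ℝ :=
  Cm00 W ξ - Cm01 W ξ * G * (Cm01 W ξ)ᵀ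

/-- A criterion `Φ` on `t×t` real symmetric matrices: concave, Loewner-nondecreasing, and
invariant under simultaneous permutations of rows and columns. -/
def GoodPhi (t : ℕ) (Φ : Matrix (Fin t) (Fin t) ℝ → ℝ) : Prop :=
  (∀ A B : Matrix (Fin t) (Fin t) ℝ, A.IsSymm → B.IsSymm → ∀ α : ℝ, 0 ≤ α → α ≤ 1 →
      α * Φ A + (1 - α) * Φ B ≤ Φ (α • A + (1 - α) • B)) ∧
  (∀ A B : Matrix (Fin t) (Fin t) ℝ, A.IsSymm → B.IsSymm → (B - A).PosSemidef → Φ A ≤ Φ B) ∧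
  (∀ (σ : Equiv.Perm (Fin t)) (C : Matrix (Fin t) (Fin t) ℝ), Φ (C.submatrix σ σ) = Φ C)

/-- Universal optimality of a measure `ξ`. -/
def UnivOptimal (W : Matrix (Plot a b) (Plot a b) ℝ) (ξ : BlockArray a b t → ℝ) : Prop :=
  ∀ η : BlockArray a b t → ℝ, IsMeasure η →
    ∀ G H : Matrix (Fin t) (Fin t) ℝ, IsGenInv (Cm11 W ξ) G → IsGenInv (Cm11 W η) H →
      ∀ Φ : Matrix (Fin t) (Fin t) ℝ → ℝ, GoodPhi t Φ →
        Φ (InfoMat W η H) ≤ Φ (InfoMat W ξ G)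

/-- A measure is symmetric if it is invariant under relabeling of the treatments. -/
def IsSymmetricMeasure (ξ : BlockArray a b t → ℝ) : Prop :=
  ∀ (σ : Equiv.Perm (Fin t)) (s : BlockArray a b t), ξ (fun q => σ (s q)) = ξ s

/-- A matrix is completely symmetric if it is of the form `αI + βJ`. -/
def ComplSym (A : Matrix (Fin t) (Fin t) ℝ) : Prop :=
  ∃ α β : ℝ, A = α • (1 : Matrix (Fin t) (Fin t) ℝ) + β • Jmat (Fin t)

/-- A measure is pseudo symmetric if `C_{ξ00}`, `C_{ξ01}`, `C_{ξ11}` are completely symmetric. -/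
def PseudoSym (W : Matrix (Plot a b) (Plot a b) ℝ) (ξ : BlockArray a b t → ℝ) : Prop :=
  ComplSym (Cm00 W ξ) ∧ ComplSym (Cm01 W ξ) ∧ ComplSym (Cm11 W ξ)

/-- `r(x) = max_{s∈S} q_s(x)`. -/
noncomputable def rfun {a b : ℕ} (t : ℕ) (W : Matrix (Plot a b) (Plot a b) ℝ) (x : ℝ) : ℝ :=
  sSup (Set.range fun s : BlockArray a b t => qpoly W s x)

/-- `min_{s∈S} q_s(x)`. -/
noncomputable def rmin {a b : ℕ} (t : ℕ) (W : Matrix (Plot a b) (Plot a b) ℝ) (x : ℝ) : ℝ :=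
  sInf (Set.range fun s : BlockArray a b t => qpoly W s x)

/-- Number of plots assigned treatment `k` by `s`. -/
noncomputable def f0 (s : BlockArray a b t) (k : Fin t) : ℕ :=
  {q : Plot a b | s q = k}.ncard

/-- Replications of `k` among the columns `1,…,b−1`. -/
noncomputable def f1 (s : BlockArray a b t) (k : Fin t) : ℕ :=
  {q : Plot a b | s q = k ∧ q.2.val + 1 < b}.ncard

/-- Replications of `k` among the columns `2,…,b`. -/
noncomputable def f2 (s : BlockArray a b t) (k : Fin t) : ℕ :=
  {q : Plot a b | s q = k ∧ 1 ≤ q.2.val}.ncard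

/-- Replications of `k` among the rows `1,…,a−1`. -/
noncomputable def f3 (s : BlockArray a b t) (k : Fin t) : ℕ :=
  {q : Plot a b | s q = k ∧ q.1.val + 1 < a}.ncard

/-- Replications of `k` among the rows `2,…,a`. -/
noncomputable def f4 (s : BlockArray a b t) (k : Fin t) : ℕ :=
  {q : Plot a b | s q = k ∧ 1 ≤ q.1.val}.ncard

noncomputable def fc (s : BlockArray a b t) : ℕ → Fin t → ℕ
  | 0 => f0 s
  | 1 => f1 s
  | 2 => f2 s
  | 3 => f3 s
  | 4 => f4 s
  | _ => fun _ => 0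

/-- `h^{uv}_s = Σ_k f^u_{s,k} f^v_{s,k}`. -/
noncomputable def hval (s : BlockArray a b t) (u v : ℕ) : ℝ :=
  ∑ k : Fin t, (fc s u k : ℝ) * (fc s v k : ℝ)

noncomputable def h00 (s : BlockArray a b t) : ℝ := hval s 0 0

noncomputable def h1 (s : BlockArray a b t) : ℝ :=
  hval s 0 1 + hval s 0 2 + hval s 0 3 + hval s 0 4

noncomputable def h2 (s : BlockArray a b t) : ℝ :=
  hval s 1 1 + hval s 2 2 + hval s 3 3 + hval s 4 4

noncomputable def h3 (s : BlockArray a b t) : ℝ :=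
  hval s 1 2 + hval s 1 3 + hval s 1 4 + hval s 2 3 + hval s 2 4 + hval s 3 4

/-- `z¹_{s,r}`: horizontally adjacent pairs of plots receiving the same treatment. -/
noncomputable def zr1 (s : BlockArray a b t) : ℕ :=
  {qr : Plot a b × Plot a b |
    qr.1.1 = qr.2.1 ∧ qr.1.2.val + 1 = qr.2.2.val ∧ s qr.1 = s qr.2}.ncard

noncomputable def zr2 (s : BlockArray a b t) : ℕ :=
  {qr : Plot a b × Plot a b |
    qr.1.1 = qr.2.1 ∧ qr.1.2.val + 2 = qr.2.2.val ∧ s qr.1 = s qr.2}.ncard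

noncomputable def zc1 (s : BlockArray a b t) : ℕ :=
  {qr : Plot a b × Plot a b |
    qr.1.2 = qr.2.2 ∧ qr.1.1.val + 1 = qr.2.1.val ∧ s qr.1 = s qr.2}.ncard

noncomputable def zc2 (s : BlockArray a b t) : ℕ :=
  {qr : Plot a b × Plot a b |
    qr.1.2 = qr.2.2 ∧ qr.1.1.val + 2 = qr.2.1.val ∧ s qr.1 = s qr.2}.ncard

/-- pairs `(i,j)`, `(i−1,j+1)` with the same treatment. -/
noncomputable def zd1 (s : BlockArray a b t) : ℕ :=
  {qr : Plot a b × Plot a b |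
    qr.2.1.val + 1 = qr.1.1.val ∧ qr.1.2.val + 1 = qr.2.2.val ∧ s qr.1 = s qr.2}.ncard

/-- pairs `(i,j)`, `(i+1,j+1)` with the same treatment. -/
noncomputable def zd2 (s : BlockArray a b t) : ℕ :=
  {qr : Plot a b × Plot a b |
    qr.1.1.val + 1 = qr.2.1.val ∧ qr.1.2.val + 1 = qr.2.2.val ∧ s qr.1 = s qr.2}.ncard

noncomputable def z1 (s : BlockArray a b t) : ℝ := 2 * zr1 s + 2 * zc1 s

noncomputable def z2 (s : BlockArray a b t) : ℝ :=
  2 * zr2 s + 2 * zc2 s + 4 * zd1 s + 4 * zd2 s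

/-- `η = 4p − 2a − 2b − 2(8ab − 7a − 7b + 4)/t + 4(2p − a − b)²/(pt)` where `p = ab`. -/
noncomputable def eta (a b t : ℕ) : ℝ :=
  4 * ((a : ℝ) * b) - 2 * a - 2 * b - 2 * (8 * (a : ℝ) * b - 7 * a - 7 * b + 4) / t +
    4 * (2 * (a : ℝ) * b - a - b) ^ 2 / (((a : ℝ) * b) * t)

/-- A corner plot of the `a × b` block. -/
def IsCorner (q : Plot a b) : Prop :=
  (q.1.val = 0 ∨ q.1.val + 1 = a) ∧ (q.2.val = 0 ∨ q.2.val + 1 = b)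

/-- Treatment `k` is significant in `s`: it occupies exactly two plots, which are
neighbors, at least one of them being a corner plot. -/
def Significant (s : BlockArray a b t) (k : Fin t) : Prop :=
  ∃ u v : Plot a b, u ≠ v ∧ {q : Plot a b | s q = k} = {u, v} ∧
    Neighbor u v ∧ (IsCorner u ∨ IsCorner v)

/-- Treatment `k` is strictly significant in `s`: both of its two plots are corners. -/
def StrictSignificant (s : BlockArray a b t) (k : Fin t) : Prop :=
  ∃ u v : Plot a b, u ≠ v ∧ {q : Plot a b | s q = k} = {u, v} ∧
    Neighbor u v ∧ IsCorner u ∧ IsCorner v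

/-- `Q_i`: block arrays with exactly `i` significant treatments in which every other
treatment appears at most once. -/
def Qset (a b t : ℕ) (i : ℕ) : Set (BlockArray a b t) :=
  {s | {k : Fin t | Significant s k}.ncard = i ∧
       ∀ k : Fin t, ¬ Significant s k → f0 s k ≤ 1}

/-- `Q_j*`: members of `Q_j` whose significant treatments are all strictly significant. -/
def QsetStar (a b t : ℕ) (j : ℕ) : Set (BlockArray a b t) :=
  {s | s ∈ Qset a b t j ∧ ∀ k : Fin t, Significant s k → StrictSignificant s k}

/-- Treatment `k` is connected in `s`. -/
def ConnectedIn (s : BlockArray a b t) (k : Fin t) : Prop :=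
  ∀ q r : Plot a b, s q = k → s r = k →
    Relation.ReflTransGen (fun u v => Neighbor u v ∧ s u = k ∧ s v = k) q r

/-! For `W` positive semidefinite with null space the constants, `T_s 1 = 1` and `W 1 = 0` give
`1' C_{ξ00} 1 = 1' C_{ξ01} 1 = 0`, so under pseudo symmetry both matrices are multiples of `B_t`;
as `B_t` also absorbs `C_{ξ11}` into a multiple of itself, the information matrix is a multiple of
`B_t`, and traces identify the factors.

A completely symmetric matrix is positive definite as soon as its quadratic form is positive on `1`
and on one contrast, here `t e_k - 1`. So it suffices that neither `F_s 1` nor `F_s (t e_k - 1)` is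
constant. The plots `(1,1)` and `(1,2)` have numbers of neighbors `d` and `d + 1`, which settles
`F_s 1`; if `m` and `n` of these neighbors carry treatment `k`, then `F_s (t e_k - 1)` takes the
values `t m - d` and `t n - d - 1`, which differ because `t ≥ 2` does not divide `1`. -/

section MatrixLemmas

variable {n : Type*}

lemma Jmat_eq_vecMulVec : Jmat n = vecMulVec 1 1 := by
  ext; simp [Jmat, vecMulVec_apply]

lemma transpose_Jmat : (Jmat n)ᵀ = Jmat n := rfl

lemma isSymm_smul_one_add_smul_Jmat [DecidableEq n] (α β : ℝ) :
    (α • (1 : Matrix n n ℝ) + β • Jmat n).IsSymm := by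
  simp only [IsSymm, transpose_add, transpose_smul, transpose_one, transpose_Jmat]

variable [Fintype n]

lemma Jmat_mulVec (x : n → ℝ) : Jmat n *ᵥ x = (1 ⬝ᵥ x) • 1 := by
  rw [Jmat_eq_vecMulVec, vecMulVec_mulVec, op_smul_eq_smul]

lemma Jmat_mul_mul_Jmat (K : Matrix n n ℝ) :
    Jmat n * K * Jmat n = (1 ⬝ᵥ K *ᵥ 1) • Jmat n := by
  rw [Jmat_eq_vecMulVec, Matrix.mul_assoc, mul_vecMulVec, vecMulVec_mul_vecMulVec, vecMulVec_smul]

variable [DecidableEq n]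

lemma transpose_Bmat : (Bmat n)ᵀ = Bmat n := by
  simp only [Bmat, transpose_sub, transpose_one, transpose_smul, transpose_Jmat]

lemma mul_inv_eq_inv_smul {𝕜 : Type*} [Field 𝕜] {A B : Matrix n n 𝕜} {c : 𝕜}
    (hA : IsUnit A) (hB : B ≠ 0) (h : B * A = c • B) : B * A⁻¹ = c⁻¹ • B := by
  have hdet := (isUnit_iff_isUnit_det A).1 hA
  have key : B = c • (B * A⁻¹) := by
    rw [← smul_mul, ← h, mul_nonsing_inv_cancel_right _ _ hdet]
  have hc : c ≠ 0 := by
    rintro rfl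
    exact hB (by rw [key, zero_smul])
  rw [eq_inv_smul_iff₀ hc, ← key]

lemma dotProduct_smul_one_add_smul_Jmat_mulVec (α β : ℝ) (x y : n → ℝ) :
    x ⬝ᵥ (α • (1 : Matrix n n ℝ) + β • Jmat n) *ᵥ y =
      α * (x ⬝ᵥ y) + β * ((1 ⬝ᵥ x) * (1 ⬝ᵥ y)) := by
  rw [add_mulVec, smul_mulVec, smul_mulVec, Jmat_mulVec, one_mulVec, dotProduct_add,
    dotProduct_smul, dotProduct_smul, dotProduct_smul, dotProduct_comm x 1]
  simp only [smul_eq_mul]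
  ring

lemma posDef_smul_one_add_smul_Jmat {α β : ℝ} (hα : 0 < α) (hαβ : 0 < α + Fintype.card n * β) :
    (α • (1 : Matrix n n ℝ) + β • Jmat n).PosDef := by
  refine .of_dotProduct_mulVec_pos
    (isHermitian_iff_isSymm.2 (isSymm_smul_one_add_smul_Jmat α β)) fun x hx => ?_
  rw [star_trivial, dotProduct_smul_one_add_smul_Jmat_mulVec]
  have hxx : 0 < x ⬝ᵥ x := by simpa using dotProduct_star_self_pos_iff.2 hx
  obtain hS | hS := eq_or_ne (1 ⬝ᵥ x) 0
  · simpa [hS] using mul_pos hα hxx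
  have hCS : (1 ⬝ᵥ x) ^ 2 ≤ Fintype.card n * (x ⬝ᵥ x) := by
    simpa [dotProduct, pow_two] using sq_sum_le_card_mul_sum_sq (s := Finset.univ) (f := x)
  refine pos_of_mul_pos_right ?_ (Nat.cast_nonneg (Fintype.card n))
  calc 0 < (α + Fintype.card n * β) * (1 ⬝ᵥ x) ^ 2 := by positivity
    _ ≤ α * (Fintype.card n * (x ⬝ᵥ x) - (1 ⬝ᵥ x) ^ 2) +
        (α + Fintype.card n * β) * (1 ⬝ᵥ x) ^ 2 :=
      le_add_of_nonneg_left (mul_nonneg hα.le (sub_nonneg.2 hCS))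
    _ = Fintype.card n * (α * (x ⬝ᵥ x) + β * ((1 ⬝ᵥ x) * (1 ⬝ᵥ x))) := by ring

variable [Nonempty n]

lemma Bmat_mul_Jmat : Bmat n * Jmat n = 0 := by
  have hJJ : Jmat n * Jmat n = (Fintype.card n : ℝ) • Jmat n := by
    simpa using Jmat_mul_mul_Jmat (1 : Matrix n n ℝ)
  rw [Bmat, Matrix.sub_mul, Matrix.one_mul, smul_mul, hJJ,
    inv_smul_smul₀ (Nat.cast_ne_zero.2 Fintype.card_ne_zero), sub_self]

lemma Bmat_mul_Bmat : Bmat n * Bmat n = Bmat n := by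
  conv_lhs => rhs; rw [Bmat]
  rw [Matrix.mul_sub, Matrix.mul_one, Matrix.mul_smul, Bmat_mul_Jmat, smul_zero, sub_zero]

lemma trace_Bmat : (Bmat n).trace = Fintype.card n - 1 := by
  simp [Bmat, Jmat, trace]

end MatrixLemmas

section ComplSym

variable {A A₀ A₁ A₂ : Matrix (Fin t) (Fin t) ℝ}

lemma complSym_of_submatrix_perm (hA : ∀ σ : Equiv.Perm (Fin t), A.submatrix σ σ = A) :
    ComplSym A := by
  have hσ (σ : Equiv.Perm (Fin t)) (k l : Fin t) : A (σ k) (σ l) = A k l :=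
    congrFun₂ (hA σ) k l
  rcases subsingleton_or_nontrivial (Fin t) with _ | _
  · refine ⟨A.trace, 0, ?_⟩
    ext k l
    simp [trace, Fintype.sum_subsingleton _ k, Subsingleton.elim l k]
  obtain ⟨i, j, hij⟩ := exists_pair_ne (Fin t)
  have hdiag (k : Fin t) : A k k = A i i := by simpa using hσ (Equiv.swap i k) i i
  have hoff {k l : Fin t} (hkl : k ≠ l) : A k l = A i j := by
    obtain ⟨σ, rfl, rfl⟩ := MulAction.is_two_pretransitive_iff.1
      (Equiv.Perm.isMultiplyPretransitive (Fin t) 2) hij hkl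
    exact hσ σ i j
  refine ⟨A i i - A i j, A i j, ?_⟩
  ext k l
  obtain rfl | hkl := eq_or_ne k l
  · simp [Jmat, hdiag k]
  · simp [Jmat, hkl, hoff hkl]

lemma ComplSym.posDef (hA : ComplSym A) (hone : 0 < 1 ⬝ᵥ A *ᵥ 1) {v : Fin t → ℝ}
    (hv : 1 ⬝ᵥ v = 0) (hvA : 0 < v ⬝ᵥ A *ᵥ v) : A.PosDef := by
  obtain ⟨α, β, rfl⟩ := hA
  rw [dotProduct_smul_one_add_smul_Jmat_mulVec, one_dotProduct_one, Fintype.card_fin] at hone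
  rw [dotProduct_smul_one_add_smul_Jmat_mulVec, hv, mul_zero, mul_zero, add_zero] at hvA
  refine posDef_smul_one_add_smul_Jmat
    (pos_of_mul_pos_left hvA (by simpa using dotProduct_star_self_nonneg v)) ?_
  rw [Fintype.card_fin]
  refine pos_of_mul_pos_right (a := (t : ℝ)) ?_ (Nat.cast_nonneg t)
  linarith

lemma ComplSym.Bmat_mul (hA : ComplSym A) (ht : 2 ≤ t) :
    Bmat (Fin t) * A = ((Bmat (Fin t) * A).trace / ((t : ℝ) - 1)) • Bmat (Fin t) := by
  have : NeZero t := ⟨by omega⟩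
  have ht1 : (t : ℝ) - 1 ≠ 0 := by
    have : (2 : ℝ) ≤ t := mod_cast ht
    linarith
  obtain ⟨α, β, rfl⟩ := hA
  rw [Matrix.mul_add, Matrix.mul_smul, Matrix.mul_smul, Bmat_mul_Jmat, Matrix.mul_one, smul_zero,
    add_zero, trace_smul, trace_Bmat, Fintype.card_fin, smul_eq_mul, mul_div_cancel_right₀ _ ht1]

lemma ComplSym.Bmat_mul_self (hA : ComplSym A) (hone : 1 ⬝ᵥ A *ᵥ 1 = 0) :
    Bmat (Fin t) * A = A := by
  obtain _ | _ := isEmpty_or_nonempty (Fin t)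
  · exact Subsingleton.elim _ _
  have ht : (t : ℝ) ≠ 0 := by simpa using (Fintype.card_ne_zero (α := Fin t))
  obtain ⟨α, β, rfl⟩ := hA
  rw [dotProduct_smul_one_add_smul_Jmat_mulVec, one_dotProduct_one, Fintype.card_fin] at hone
  have hβ : β = -(α * (t : ℝ)⁻¹) := by
    field_simp
    linarith [mul_left_cancel₀ ht (show (t : ℝ) * (β * t + α) = t * 0 by linarith)]
  have hB : α • 1 + β • Jmat (Fin t) = α • Bmat (Fin t) := by
    rw [Bmat, Fintype.card_fin, smul_sub, smul_smul, hβ, neg_smul, sub_eq_add_neg]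
  rw [hB, Matrix.mul_smul, Bmat_mul_Bmat]

lemma ComplSym.sub_mul_inv_mul_transpose (h₀ : ComplSym A₀) (h₁ : ComplSym A₁)
    (h₂ : ComplSym A₂) (ht : 2 ≤ t) (hone₀ : 1 ⬝ᵥ A₀ *ᵥ 1 = 0) (hone₁ : 1 ⬝ᵥ A₁ *ᵥ 1 = 0)
    (hA₂ : IsUnit A₂) :
    A₀ - A₁ * A₂⁻¹ * A₁ᵀ =
      (((Bmat (Fin t) * A₀).trace -
        (Bmat (Fin t) * A₁).trace ^ 2 / (Bmat (Fin t) * A₂).trace) / ((t : ℝ) - 1)) •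
          Bmat (Fin t) := by
  have : NeZero t := ⟨by omega⟩
  have ht1 : (t : ℝ) - 1 ≠ 0 := by
    have : (2 : ℝ) ≤ t := mod_cast ht
    linarith
  have hB : Bmat (Fin t) ≠ 0 := fun h => ht1 <| by
    simpa [h] using (trace_Bmat (n := Fin t)).symm
  have e₀ := (h₀.Bmat_mul_self hone₀).symm.trans (h₀.Bmat_mul ht)
  have e₁ := (h₁.Bmat_mul_self hone₁).symm.trans (h₁.Bmat_mul ht)
  have e₂ := mul_inv_eq_inv_smul hA₂ hB (h₂.Bmat_mul ht)
  set c₀ := (Bmat (Fin t) * A₀).trace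
  set c₁ := (Bmat (Fin t) * A₁).trace
  set c₂ := (Bmat (Fin t) * A₂).trace
  rw [e₀, e₁, smul_mul, e₂, transpose_smul, transpose_Bmat, smul_mul, smul_mul, Matrix.mul_smul,
    Bmat_mul_Bmat, smul_smul, smul_smul, ← sub_smul]
  congr 1
  field_simp

end ComplSym

/-- The symmetric positive semidefinite quadratic forms that vanish exactly on the constant
vectors. This is what the argument needs to know about `B̃`. -/
structure IsContrastForm {n : Type*} [Fintype n] (W : Matrix n n ℝ) : Prop where
  posSemidef : W.PosSemidef
  mulVec_eq_zero_iff (x : n → ℝ) : W *ᵥ x = 0 ↔ ∃ c : ℝ, x = c • 1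

namespace IsContrastForm

variable {n : Type*} [Fintype n] {W : Matrix n n ℝ}

lemma one_dotProduct_mulVec (hW : IsContrastForm W) (x : n → ℝ) : 1 ⬝ᵥ W *ᵥ x = 0 := by
  have hWT : Wᵀ = W := isHermitian_iff_isSymm.1 hW.posSemidef.isHermitian
  have hone : W *ᵥ 1 = 0 := (hW.mulVec_eq_zero_iff 1).2 ⟨1, (one_smul ℝ 1).symm⟩
  rw [dotProduct_mulVec, ← mulVec_transpose, hWT, hone, zero_dotProduct]

lemma dotProduct_mulVec_nonneg (hW : IsContrastForm W) (x : n → ℝ) : 0 ≤ x ⬝ᵥ W *ᵥ x := by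
  simpa using hW.posSemidef.dotProduct_mulVec_nonneg x

lemma dotProduct_mulVec_pos (hW : IsContrastForm W) {x : n → ℝ} {i j : n} (hx : x i ≠ x j) :
    0 < x ⬝ᵥ W *ᵥ x := by
  refine (hW.dotProduct_mulVec_nonneg x).lt_of_ne' fun h => hx ?_
  obtain ⟨c, rfl⟩ := (hW.mulVec_eq_zero_iff x).1 <|
    (hW.posSemidef.dotProduct_mulVec_zero_iff x).1 (by rwa [star_trivial])
  rfl

end IsContrastForm

section Projection

variable {n : Type*} [Fintype n] [DecidableEq n] {K : Matrix n n ℝ}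

/-- The projection `1 - J K / (1' K 1)` along the constant vectors, orthogonal for the inner
product given by `K`. -/
noncomputable def projAlongOne (K : Matrix n n ℝ) : Matrix n n ℝ :=
  1 - (1 ⬝ᵥ K *ᵥ 1)⁻¹ • (Jmat n * K)

lemma projAlongOne_mulVec (x : n → ℝ) :
    projAlongOne K *ᵥ x = x - ((1 ⬝ᵥ K *ᵥ 1)⁻¹ * (1 ⬝ᵥ K *ᵥ x)) • 1 := by
  rw [projAlongOne, sub_mulVec, one_mulVec, smul_mulVec, ← mulVec_mulVec, Jmat_mulVec, smul_smul]

lemma projAlongOne_mulVec_eq_zero_iff (hK : 1 ⬝ᵥ K *ᵥ 1 ≠ 0) (x : n → ℝ) :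
    projAlongOne K *ᵥ x = 0 ↔ ∃ c : ℝ, x = c • 1 := by
  rw [projAlongOne_mulVec, sub_eq_zero]
  refine ⟨fun h => ⟨_, h⟩, ?_⟩
  rintro ⟨c, rfl⟩
  rw [mulVec_smul, dotProduct_smul, smul_eq_mul, mul_left_comm, inv_mul_cancel₀ hK, mul_one]

lemma transpose_projAlongOne_mul_mul (hKsymm : K.IsSymm) (hK : 1 ⬝ᵥ K *ᵥ 1 ≠ 0) :
    (projAlongOne K)ᵀ * K * projAlongOne K =
      K - (1 ⬝ᵥ K *ᵥ 1)⁻¹ • (K * Jmat n * K) := by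
  have hJ : K * Jmat n * K * Jmat n * K = (1 ⬝ᵥ K *ᵥ 1) • (K * Jmat n * K) := by
    have h := congrArg (K * · * K) (Jmat_mul_mul_Jmat K)
    simpa only [Matrix.mul_assoc, Matrix.mul_smul, smul_mul] using h
  simp only [projAlongOne, transpose_sub, transpose_one, transpose_smul, transpose_mul,
    transpose_Jmat, hKsymm.eq, Matrix.sub_mul, Matrix.mul_sub, Matrix.one_mul, Matrix.mul_one,
    smul_mul, Matrix.mul_smul, ← Matrix.mul_assoc, hJ, inv_smul_smul₀ hK, sub_self,
    smul_zero, sub_zero]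

end Projection

lemma isContrastForm_sub_smul_mul_Jmat_mul {n : Type*} [Fintype n] [Nonempty n]
    {K : Matrix n n ℝ} (hK : K.PosDef) :
    IsContrastForm (K - (1 ⬝ᵥ K *ᵥ 1)⁻¹ • (K * Jmat n * K)) := by
  classical
  have hone : 1 ⬝ᵥ K *ᵥ 1 ≠ 0 := by
    simpa using (hK.dotProduct_mulVec_pos (one_ne_zero (α := n → ℝ))).ne'
  rw [← transpose_projAlongOne_mul_mul (isHermitian_iff_isSymm.1 hK.isHermitian) hone]
  have hpsd := hK.posSemidef.conjTranspose_mul_mul_same (projAlongOne K)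
  rw [conjTranspose_eq_transpose_of_trivial] at hpsd
  refine ⟨hpsd, fun x => ?_⟩
  rw [← projAlongOne_mulVec_eq_zero_iff hone]
  refine ⟨fun h => ?_, fun h => by rw [← mulVec_mulVec, h, mulVec_zero]⟩
  by_contra hx
  have hquad : x ⬝ᵥ ((projAlongOne K)ᵀ * K * projAlongOne K) *ᵥ x =
      (projAlongOne K *ᵥ x) ⬝ᵥ K *ᵥ (projAlongOne K *ᵥ x) := by
    rw [← mulVec_mulVec, ← mulVec_mulVec, dotProduct_mulVec, vecMul_transpose]
  have hpos := hK.dotProduct_mulVec_pos hx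
  rw [star_trivial, ← hquad, h, dotProduct_zero] at hpos
  exact hpos.false

lemma isContrastForm_Btilde [Nonempty (Plot a b)] {Sig : Matrix (Plot a b) (Plot a b) ℝ}
    (hSig : Sig.PosDef) : IsContrastForm (Btilde Sig) := by
  have hsum : ∑ i, ∑ j, Sig⁻¹ i j = 1 ⬝ᵥ Sig⁻¹ *ᵥ 1 := by
    simp only [one_dotProduct, mulVec, dotProduct_one]
  rw [Btilde, hsum]
  exact isContrastForm_sub_smul_mul_Jmat_mul hSig.inv

lemma dotProduct_sum_smul_mulVec {R ι m n : Type*} [CommSemiring R] [Fintype ι] [Fintype m]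
    [Fintype n] (W : Matrix m m R) (X Y : ι → Matrix m n R) (ξ : ι → R) (u v : n → R) :
    u ⬝ᵥ (∑ s, ξ s • ((X s)ᵀ * W * Y s)) *ᵥ v =
      ∑ s, ξ s * ((X s *ᵥ u) ⬝ᵥ W *ᵥ (Y s *ᵥ v)) := by
  rw [sum_mulVec, dotProduct_sum]
  refine Finset.sum_congr rfl fun s _ => ?_
  rw [smul_mulVec, dotProduct_smul, smul_eq_mul, ← mulVec_mulVec, ← mulVec_mulVec,
    dotProduct_mulVec, vecMul_transpose]

lemma trace_mul_sum_smul {R ι n : Type*} [CommSemiring R] [Fintype ι] [Fintype n]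
    (B : Matrix n n R) (C : ι → Matrix n n R) (ξ : ι → R) :
    (B * ∑ s, ξ s • C s).trace = ∑ s, ξ s * (B * C s).trace := by
  simp only [Matrix.mul_sum, trace_sum, Matrix.mul_smul, trace_smul, smul_eq_mul]

section Mixture

variable {W : Matrix (Plot a b) (Plot a b) ℝ} {ξ : BlockArray a b t → ℝ}

lemma Tmat_comp_perm (σ : Equiv.Perm (Fin t)) (s : BlockArray a b t) :
    (Tmat (σ ∘ s)).submatrix id σ = Tmat s := by
  ext q k
  simp [Tmat]

lemma Fmat_comp_perm (σ : Equiv.Perm (Fin t)) (s : BlockArray a b t) :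
    (Fmat (σ ∘ s)).submatrix id σ = Fmat s := by
  rw [Fmat, Fmat, ← Tmat_comp_perm σ s]
  rfl

lemma IsSymmetricMeasure.complSym_sum (hξ : IsSymmetricMeasure ξ)
    {X Y : BlockArray a b t → Matrix (Plot a b) (Fin t) ℝ}
    (hX : ∀ (σ : Equiv.Perm (Fin t)) s, (X (σ ∘ s)).submatrix id σ = X s)
    (hY : ∀ (σ : Equiv.Perm (Fin t)) s, (Y (σ ∘ s)).submatrix id σ = Y s) :
    ComplSym (∑ s, ξ s • ((X s)ᵀ * W * Y s)) := by
  refine complSym_of_submatrix_perm fun σ => ?_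
  have hterm (s : BlockArray a b t) :
      ((X (σ ∘ s))ᵀ * W * Y (σ ∘ s)).submatrix σ σ = (X s)ᵀ * W * Y s := by
    rw [← hX σ s, ← hY σ s]
    rfl
  ext k l
  calc (∑ s, ξ s • ((X s)ᵀ * W * Y s)) (σ k) (σ l)
      = ∑ s, ξ (σ ∘ s) * ((X (σ ∘ s))ᵀ * W * Y (σ ∘ s)) (σ k) (σ l) := by
        rw [Matrix.sum_apply, ← Equiv.sum_comp ((Equiv.refl (Plot a b)).arrowCongr σ)]
        rfl
    _ = ∑ s, ξ s * ((X s)ᵀ * W * Y s) k l :=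
        Finset.sum_congr rfl fun s _ => congrArg₂ (· * ·) (hξ σ s) (congrFun₂ (hterm s) k l)
    _ = (∑ s, ξ s • ((X s)ᵀ * W * Y s)) k l := by
        rw [Matrix.sum_apply]
        rfl

lemma IsSymmetricMeasure.pseudoSym (hξ : IsSymmetricMeasure ξ) : PseudoSym W ξ :=
  ⟨hξ.complSym_sum Tmat_comp_perm Tmat_comp_perm, hξ.complSym_sum Tmat_comp_perm Fmat_comp_perm,
    hξ.complSym_sum Fmat_comp_perm Fmat_comp_perm⟩

lemma IsMeasure.exists_pos (hξ : IsMeasure ξ) : ∃ s, 0 < ξ s := by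
  obtain ⟨s, -, hs⟩ := Finset.exists_ne_zero_of_sum_ne_zero (hξ.2.trans_ne one_ne_zero)
  exact ⟨s, (hξ.1 s).lt_of_ne' hs⟩

lemma Tmat_mulVec_one (s : BlockArray a b t) : Tmat s *ᵥ 1 = 1 := by
  ext q
  simp [Tmat, mulVec, dotProduct]

lemma Fmat_mulVec_one (s : BlockArray a b t) : Fmat s *ᵥ 1 = Mmat a b *ᵥ 1 := by
  rw [Fmat, ← mulVec_mulVec, Tmat_mulVec_one]

lemma one_dotProduct_Cm00_mulVec_one (hW : IsContrastForm W) : 1 ⬝ᵥ Cm00 W ξ *ᵥ 1 = 0 := by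
  simp only [Cm00, Cs00, dotProduct_sum_smul_mulVec, Tmat_mulVec_one, hW.one_dotProduct_mulVec,
    mul_zero, Finset.sum_const_zero]

lemma one_dotProduct_Cm01_mulVec_one (hW : IsContrastForm W) : 1 ⬝ᵥ Cm01 W ξ *ᵥ 1 = 0 := by
  simp only [Cm01, Cs01, dotProduct_sum_smul_mulVec, Tmat_mulVec_one, hW.one_dotProduct_mulVec,
    mul_zero, Finset.sum_const_zero]

lemma dotProduct_Cm11_mulVec_pos (hW : IsContrastForm W) (hξ : IsMeasure ξ) {v : Fin t → ℝ}
    {q r : Plot a b} (hv : ∀ s : BlockArray a b t, (Fmat s *ᵥ v) q ≠ (Fmat s *ᵥ v) r) :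
    0 < v ⬝ᵥ Cm11 W ξ *ᵥ v := by
  obtain ⟨s, hs⟩ := hξ.exists_pos
  simp only [Cm11, Cs11, dotProduct_sum_smul_mulVec]
  exact Finset.sum_pos' (fun s _ => mul_nonneg (hξ.1 s) (hW.dotProduct_mulVec_nonneg _))
    ⟨s, Finset.mem_univ s, mul_pos hs (hW.dotProduct_mulVec_pos (hv s))⟩

lemma qstar_eq_trace : qstar W ξ = (Bmat (Fin t) * Cm00 W ξ).trace -
    (Bmat (Fin t) * Cm01 W ξ).trace ^ 2 / (Bmat (Fin t) * Cm11 W ξ).trace := by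
  simp only [qstar, cm00, cm01, cm11, cs00, cs01, cs11, Cm00, Cm01, Cm11, trace_mul_sum_smul]

lemma PseudoSym.infoMat_eq (hW : IsContrastForm W) (hP : PseudoSym W ξ) (ht : 2 ≤ t)
    (hC : IsUnit (Cm11 W ξ)) :
    Cm00 W ξ - Cm01 W ξ * (Cm11 W ξ)⁻¹ * (Cm01 W ξ)ᵀ =
      (qstar W ξ / ((t : ℝ) - 1)) • Bmat (Fin t) := by
  obtain ⟨h₀, h₁, h₂⟩ := hP
  rw [qstar_eq_trace]
  exact h₀.sub_mul_inv_mul_transpose h₁ h₂ ht (one_dotProduct_Cm00_mulVec_one hW)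
    (one_dotProduct_Cm01_mulVec_one hW) hC

end Mixture

section Neighbors

open SimpleGraph

lemma Mmat_eq_adjMatrix [DecidableRel (pathGraph a □ pathGraph b).Adj] :
    Mmat a b = (pathGraph a □ pathGraph b).adjMatrix ℝ := by
  ext q r
  rw [Mmat, of_apply, adjMatrix_apply]
  refine if_congr ?_ rfl rfl
  rw [Neighbor, boxProd_adj, pathGraph_adj, pathGraph_adj, or_comm, and_comm,
    and_comm (a := q.1 = r.1)]

lemma degree_pathGraph_zero {n : ℕ} [Fintype ((pathGraph (n + 2)).neighborSet 0)] :
    (pathGraph (n + 2)).degree 0 = 1 := by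
  have h : (pathGraph (n + 2)).neighborFinset 0 = {1} := by
    ext i
    simp only [mem_neighborFinset, pathGraph_adj, Finset.mem_singleton, Fin.ext_iff,
      Fin.val_zero, Fin.val_one]
    omega
  rw [degree, h, Finset.card_singleton]

lemma degree_pathGraph_one {n : ℕ} [Fintype ((pathGraph (n + 3)).neighborSet 1)] :
    (pathGraph (n + 3)).degree 1 = 2 := by
  have h : (pathGraph (n + 3)).neighborFinset 1 = {0, 2} := by
    ext i
    simp only [mem_neighborFinset, pathGraph_adj, Finset.mem_insert, Finset.mem_singleton,
      Fin.ext_iff, Fin.val_zero, Fin.val_one, Fin.val_two]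
    omega
  have hne : (0 : Fin (n + 3)) ≠ 2 := by
    simp only [ne_eq, Fin.ext_iff, Fin.val_zero, Fin.val_two]
    omega
  rw [degree, h, Finset.card_pair hne]

lemma exists_Mmat_mulVec_one_eq_add_one (ha : 0 < a) (hb : 3 ≤ b) :
    ∃ (q r : Plot a b) (d : ℕ), (Mmat a b *ᵥ 1) q = d ∧ (Mmat a b *ᵥ 1) r = d + 1 := by
  classical
  obtain ⟨n, rfl⟩ := Nat.exists_eq_add_of_le' hb
  have hdeg (q : Plot a (n + 3)) :
      (Mmat a (n + 3) *ᵥ 1) q = (pathGraph a).degree q.1 + (pathGraph (n + 3)).degree q.2 := by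
    rw [Mmat_eq_adjMatrix, ← Function.const_one, adjMatrix_mulVec_const_apply, degree_boxProd,
      mul_one, Nat.cast_add]
  refine ⟨(⟨0, ha⟩, 0), (⟨0, ha⟩, 1), (pathGraph a).degree ⟨0, ha⟩ + 1, ?_, ?_⟩
  · rw [hdeg, degree_pathGraph_zero]
    norm_num
  · rw [hdeg, degree_pathGraph_one]
    push_cast
    ring

end Neighbors

lemma Fmat_apply_eq_card (s : BlockArray a b t) (q : Plot a b) (k : Fin t) :
    Fmat s q k = Finset.card {r : Plot a b | Neighbor q r ∧ s r = k} := by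
  simp only [Fmat, mul_apply, Mmat, Tmat, of_apply, mul_ite, mul_one, mul_zero, ← ite_and,
    Finset.sum_boole, and_comm]

lemma Fmat_mulVec_smul_single_sub_one_ne (ht : 2 ≤ t) {q r : Plot a b} {d : ℕ}
    (hq : (Mmat a b *ᵥ 1) q = d) (hr : (Mmat a b *ᵥ 1) r = d + 1) (s : BlockArray a b t)
    (k : Fin t) :
    (Fmat s *ᵥ ((t : ℝ) • Pi.single k 1 - 1)) q ≠
      (Fmat s *ᵥ ((t : ℝ) • Pi.single k 1 - 1)) r := by
  intro h
  simp only [mulVec_sub, mulVec_smul, Fmat_mulVec_one, mulVec_single_one, Pi.sub_apply,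
    Pi.smul_apply, col_apply, smul_eq_mul, hq, hr, Fmat_apply_eq_card] at h
  set m := Finset.card {p : Plot a b | Neighbor q p ∧ s p = k}
  set n := Finset.card {p : Plot a b | Neighbor r p ∧ s p = k}
  have hmul : (1 : ℝ) = t * (n - m) := by linarith
  have hdvd : t ∣ 1 := by
    rw [← Int.natCast_dvd_natCast, Nat.cast_one]
    exact ⟨n - m, by exact_mod_cast hmul⟩
  have := Nat.le_of_dvd one_pos hdvd
  omega

lemma PseudoSym.posDef_Cm11 {W : Matrix (Plot a b) (Plot a b) ℝ} {ξ : BlockArray a b t → ℝ}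
    (hP : PseudoSym W ξ) (hW : IsContrastForm W) (hξ : IsMeasure ξ) (ha : 0 < a) (hb : 3 ≤ b)
    (ht : 2 ≤ t) : (Cm11 W ξ).PosDef := by
  obtain ⟨q, r, d, hq, hr⟩ := exists_Mmat_mulVec_one_eq_add_one ha hb
  let k : Fin t := ⟨0, by omega⟩
  have hone : 0 < 1 ⬝ᵥ Cm11 W ξ *ᵥ 1 :=
    dotProduct_Cm11_mulVec_pos hW hξ (q := q) (r := r) fun s => by
      rw [Fmat_mulVec_one, hq, hr]
      exact (lt_add_one _).ne
  have hcontrast := dotProduct_Cm11_mulVec_pos hW hξ fun s =>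
    Fmat_mulVec_smul_single_sub_one_ne ht hq hr s k
  have horth : 1 ⬝ᵥ ((t : ℝ) • Pi.single k 1 - 1) = 0 := by
    simp [dotProduct_sub]
  exact hP.2.2.posDef hone horth hcontrast

theorem symmetric_pseudoSym_and_infoMat_general (ha : 0 < a) (hb : 3 ≤ b) (ht : 2 ≤ t)
    {W : Matrix (Plot a b) (Plot a b) ℝ} (hW : IsContrastForm W) :
    (∀ ξ : BlockArray a b t → ℝ, IsSymmetricMeasure ξ → PseudoSym W ξ) ∧
    (∀ ξ : BlockArray a b t → ℝ, IsMeasure ξ → PseudoSym W ξ →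
       (Cm11 W ξ).PosDef ∧ IsUnit (Cm11 W ξ) ∧
       Cm00 W ξ - Cm01 W ξ * (Cm11 W ξ)⁻¹ * (Cm01 W ξ)ᵀ
         = (qstar W ξ / ((t : ℝ) - 1)) • Bmat (Fin t)) := by
  refine ⟨fun ξ hξ => hξ.pseudoSym, fun ξ hξ hP => ?_⟩
  have hpos := hP.posDef_Cm11 hW hξ ha hb ht
  exact ⟨hpos, hpos.isUnit, hP.infoMat_eq hW ht hpos.isUnit⟩

/-- every symmetric measure is pseudo symmetric; and for every pseudo
symmetric measure `ξ`, `C_{ξ11}` is positive definite (hence invertible) and the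
information matrix equals `q*_ξ · B_t/(t−1)`. -/
theorem symmetric_pseudoSym_and_infoMat
    (a b t : ℕ) (ha : 2 ≤ a) (hab : a ≤ b) (hb : 3 ≤ b) (ht : 2 ≤ t)
    (Sig : Matrix (Plot a b) (Plot a b) ℝ) (hSig : Sig.PosDef) :
    (∀ ξ : BlockArray a b t → ℝ, IsMeasure ξ → IsSymmetricMeasure ξ →
       PseudoSym (Btilde Sig) ξ) ∧
    (∀ ξ : BlockArray a b t → ℝ, IsMeasure ξ → PseudoSym (Btilde Sig) ξ →
       (Cm11 (Btilde Sig) ξ).PosDef ∧ IsUnit (Cm11 (Btilde Sig) ξ) ∧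
       Cm00 (Btilde Sig) ξ - Cm01 (Btilde Sig) ξ * (Cm11 (Btilde Sig) ξ)⁻¹ *
           (Cm01 (Btilde Sig) ξ)ᵀ
         = (qstar (Btilde Sig) ξ / ((t : ℝ) - 1)) • Bmat (Fin t)) := by
  have : Nonempty (Plot a b) := ⟨⟨0, by omega⟩, ⟨0, by omega⟩⟩
  have h := symmetric_pseudoSym_and_infoMat_general (t := t) (by omega : 0 < a) hb ht
    (isContrastForm_Btilde hSig)
  exact ⟨fun ξ _ => h.1 ξ, h.2⟩

end TwoDim
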